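/- Let G be a finite group which is a central product G = MC, where M is a perfect group with center Z(M) of order 3 and M/Z(M) ≅ A6 (so M is the triple cover 3·A6), C is a subgroup commuting elementwise with M, and M ∩ C = Z(M). Then the average of the degrees of the irreducible complex characters of G is at least 16/5. -/

import Mathlib

open CategoryTheory

/-- The set of irreducible complex characters of `G`: characters of simple
finite-dimensional complex representations of `G`. -/
noncomputable def IrrChar (G : Type) [Group G] : Set (G → ℂ) :=
  {χ | ∃ V : FDRep ℂ G, Simple V ∧ χ = fun g => V.character g}

/-- The degree of a character, read off from its value at `1`. -/
noncomputable def charDeg {G : Type} [Group G] (χ : G → ℂ) : ℕ :=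
  ⌊(χ 1).re⌋₊

/-- The average degree of the irreducible characters of `G` satisfying a
predicate `p` (with the convention that the average of the empty set is `0`). -/
noncomputable def acdRel (G : Type) [Group G] (p : (G → ℂ) → Prop) : ℝ :=
  (∑ᶠ χ ∈ {χ ∈ IrrChar G | p χ}, (charDeg χ : ℝ)) /
    ({χ ∈ IrrChar G | p χ} : Set (G → ℂ)).ncard

/-- The average character degree of `G`. -/
noncomputable def acd (G : Type) [Group G] : ℝ := acdRel G fun _ => True

/-!
Enlarging `C` to the centralizer of `M`, put `Z = M ⊓ C`, a central subgroup of order `p = 3`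
contained in the commutator subgroup. Then `G ⧸ Z` is the direct product of `M ⧸ Z(M)` and
`G ⧸ M`, so its average degree `a` is at least that of `A₆`. An irreducible character of `G` which
is nontrivial on `Z` has degree divisible by `p`: an element of `Z` acts as a scalar `ζ` of order
`p`, and `ζ ^ χ(1)` is a determinant, hence trivial on commutators. Since `G` has at most `p` times
as many conjugacy classes as `G ⧸ Z`, the remaining characters, those of `G ⧸ Z`, make up at least
`1 / p` of all, and so `acd(G) ≥ p - 1 + a / p` as soon as `a ≥ p`.

For `A₆`, the bound `a ≥ 18 / 5` needs no character table: a perfect group of order `360` with at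
most `9` conjugacy classes has one character of degree `1` and all others of degree at least `2`,
and `∑ χ(1) ^ 2 = 360` then forces `∑ χ(1)` to be large. Finally `2 + (18 / 5) / 3 = 16 / 5`.
-/

section Schur

variable {k G V : Type*} [Field k] [Group G] [AddCommGroup V] [Module k V]

theorem nontrivial_of_finrank_intertwiningMap_eq_one {ρ : Representation k G V}
    (hρ : Module.finrank k (ρ.IntertwiningMap ρ) = 1) : Nontrivial V := by
  by_contra! h
  have : Subsingleton (ρ.IntertwiningMap ρ) := ⟨fun f f' => by ext v; exact Subsingleton.elim _ _⟩
  exact zero_ne_one (Module.finrank_zero_of_subsingleton.symm.trans hρ)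

theorem exists_eq_smul_one_of_commute {ρ : Representation k G V}
    (hρ : Module.finrank k (ρ.IntertwiningMap ρ) = 1) {T : Module.End k V}
    (hT : ∀ g, Commute T (ρ g)) : ∃ c : k, T = c • 1 := by
  have := nontrivial_of_finrank_intertwiningMap_eq_one hρ
  have id_ne_zero : Representation.IntertwiningMap.id ρ ≠ 0 := fun h =>
    one_ne_zero (α := Module.End k V) congr(($h).toLinearMap)
  obtain ⟨c, hc⟩ := (finrank_eq_one_iff_of_nonzero' _ id_ne_zero).1 hρ ⟨T, hT⟩
  exact ⟨c, congr(($hc).toLinearMap).symm⟩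

theorem det_eq_one_of_mem_commutator (ρ : Representation k G V) {g : G}
    (hg : g ∈ commutator G) : LinearMap.det (ρ g) = 1 := by
  have h := Abelianization.commutator_subset_ker
    ((Units.map (LinearMap.det : Module.End k V →* k)).comp ρ.asGroupHom) hg
  exact congr(($h : k))

variable [Fintype G] [IsAlgClosed k] [CharZero k] [FiniteDimensional k V]

theorem sum_smul_eq_zero_of_sum_mul_character_eq_zero (ρ : Representation k G V)
    [ρ.IsIrreducible] {f : G → k} (hf : ∀ g h, f (h * g * h⁻¹) = f g)
    (horth : ∑ g, f g * ρ.character g = 0) : ∑ g, f g • ρ g = 0 := by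
  have hcomm (x : G) : Commute (∑ g, f g • ρ g) (ρ x) := by
    rw [commute_iff_eq, Finset.sum_mul, Finset.mul_sum]
    refine Fintype.sum_equiv (MulAut.conj x⁻¹).toEquiv _ _ fun g => ?_
    have hfg : f ((MulAut.conj x⁻¹).toEquiv g) = f g := hf g x⁻¹
    rw [hfg, smul_mul_assoc, mul_smul_comm, ← map_mul, ← map_mul]
    congr 2
    simp [mul_assoc]
  obtain ⟨c, hc⟩ := exists_eq_smul_one_of_commute
    (Representation.IsIrreducible.finrank_intertwiningMap_self ρ) hcomm
  have htrace : ∑ g, f g * ρ.character g = c * Module.finrank k V := by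
    simpa [Representation.character] using congr(LinearMap.trace k V $hc)
  rcases mul_eq_zero.1 (htrace.symm.trans horth) with rfl | hV
  · rw [hc, zero_smul]
  · have : Subsingleton V := Module.finrank_zero_iff.1 (by exact_mod_cast hV)
    exact Subsingleton.elim _ _

end Schur

section GroupAlgebra

open scoped MonoidAlgebra

universe u v

variable {k : Type u} {G : Type v} [Field k] [Group G]

theorem asAlgebraHom_ofModule' (M : Type*) [AddCommGroup M] [Module k M] [Module k[G] M]
    [IsScalarTower k k[G] M] :
    (Representation.ofModule' (k := k) (G := G) M).asAlgebraHom = Algebra.lsmul k k M :=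
  (MonoidAlgebra.lift k (Module.End k M) G).apply_symm_apply _

theorem isIrreducible_ofModule' (M : Type*) [AddCommGroup M] [Module k M] [Module k[G] M]
    [IsScalarTower k k[G] M] [IsSimpleModule k[G] M] :
    (Representation.ofModule' (k := k) (G := G) M).IsIrreducible := by
  let e : (Representation.ofModule' (k := k) (G := G) M).asModule ≃ₗ[k[G]] M :=
    { (Representation.ofModule' (k := k) (G := G) M).asModuleEquiv with
      map_smul' := fun r x =>
        (Representation.asModuleEquiv_map_smul _ r x).trans congr($(asAlgebraHom_ofModule' M) r _) }
  exact (Representation.irreducible_iff_isSimpleModule_asModule _).2 (IsSimpleModule.congr e)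

-- An element of the group algebra killing every simple module lies in every maximal left ideal,
-- hence in the Jacobson radical, which vanishes by Maschke's theorem.
theorem eq_zero_of_forall_isIrreducible_sum_smul_eq_zero [Fintype G] [CharZero k] {f : G → k}
    (hf : ∀ (V : Type max u v) [AddCommGroup V] [Module k V] [FiniteDimensional k V]
      (ρ : Representation k G V) [ρ.IsIrreducible], ∑ g, f g • ρ g = 0) : f = 0 := by
  classical
  let a : k[G] := ∑ g, f g • MonoidAlgebra.of k G g
  have a_mem (m : Ideal k[G]) (hm : m.IsMaximal) : a ∈ m := by
    have : IsSimpleModule k[G] (k[G] ⧸ m) := isSimpleModule_iff_isCoatom.2 hm.out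
    have := isIrreducible_ofModule' (k := k) (G := G) (k[G] ⧸ m)
    have : FiniteDimensional k (k[G] ⧸ m) := Module.Finite.trans k[G] _
    have ha : (Representation.ofModule' (k := k) (G := G) (k[G] ⧸ m)).asAlgebraHom a = 0 := by
      simpa [a] using hf _ (Representation.ofModule' (k[G] ⧸ m))
    rw [asAlgebraHom_ofModule'] at ha
    rw [← Submodule.Quotient.mk_eq_zero, ← mul_one a, ← smul_eq_mul, Submodule.Quotient.mk_smul]
    exact congr($ha _)
  have : NeZero (Nat.card G : k) := ⟨Nat.cast_ne_zero.2 Nat.card_pos.ne'⟩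
  have ha : a = 0 := by
    rw [← Submodule.mem_bot k[G], ← IsSemisimpleRing.jacobson_eq_bot,
      Ring.jacobson_eq_sInf_isMaximal]
    exact Submodule.mem_sInf.2 a_mem
  funext g
  simpa [a, Finsupp.single_apply] using congr(($ha).coeff g)

end GroupAlgebra

section IrreducibleCharacters

variable {G : Type} [Group G]

theorem character_mem_irrChar_iff_sum_eq_card [Fintype G] {V : Type} [AddCommGroup V] [Module ℂ V]
    [FiniteDimensional ℂ V] (ρ : Representation ℂ G V) :
    ρ.character ∈ IrrChar G ↔ ∑ g, ρ.character g * ρ.character g⁻¹ = Nat.card G := by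
  constructor
  · rintro ⟨W, hW, hρ⟩
    rw [hρ]
    exact (FDRep.simple_iff_char_is_norm_one W).1 hW
  · exact fun h => ⟨FDRep.of ρ, (FDRep.simple_iff_char_is_norm_one _).2 h, rfl⟩

theorem character_mem_irrChar_iff [Finite G] {V : Type} [AddCommGroup V] [Module ℂ V]
    [FiniteDimensional ℂ V] (ρ : Representation ℂ G V) :
    ρ.character ∈ IrrChar G ↔ Module.finrank ℂ (ρ.IntertwiningMap ρ) = 1 := by
  have := Fintype.ofFinite G
  have hcard : (Nat.card G : ℂ) ≠ 0 := Nat.cast_ne_zero.2 Nat.card_pos.ne'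
  have := invertibleOfNonzero hcard
  rw [character_mem_irrChar_iff_sum_eq_card, ← Nat.cast_inj (R := ℂ), Nat.cast_one,
    ← Representation.card_inv_mul_sum_char_mul_char_eq_finrank, inv_mul_eq_one₀ hcard, eq_comm]

theorem exists_representation_of_mem_irrChar [Finite G] {χ : G → ℂ} (hχ : χ ∈ IrrChar G) :
    ∃ (V : Type) (_ : AddCommGroup V) (_ : Module ℂ V) (_ : FiniteDimensional ℂ V)
      (ρ : Representation ℂ G V),
      Module.finrank ℂ (ρ.IntertwiningMap ρ) = 1 ∧ ρ.character = χ := by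
  obtain ⟨V, -, rfl⟩ := id hχ
  exact ⟨V, inferInstance, inferInstance, inferInstance, V.ρ,
    (character_mem_irrChar_iff V.ρ).1 hχ, rfl⟩

theorem charDeg_character {V : Type} [AddCommGroup V] [Module ℂ V] [FiniteDimensional ℂ V]
    (ρ : Representation ℂ G V) : charDeg ρ.character = Module.finrank ℂ V := by
  simp [charDeg]

theorem irrChar_apply_one {χ : G → ℂ} (hχ : χ ∈ IrrChar G) : χ 1 = charDeg χ := by
  obtain ⟨V, -, rfl⟩ := hχ
  exact V.char_one.trans congr(($(charDeg_character V.ρ) : ℂ)).symm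

theorem irrChar_apply_conj {χ : G → ℂ} (hχ : χ ∈ IrrChar G) (g h : G) :
    χ (h * g * h⁻¹) = χ g := by
  obtain ⟨V, -, rfl⟩ := hχ
  exact V.char_conj g h

theorem one_mem_irrChar [Finite G] : (1 : G → ℂ) ∈ IrrChar G := by
  have := Fintype.ofFinite G
  have hone : (Representation.trivial ℂ G ℂ).character = 1 := by
    ext g
    simp [Representation.character]
  rw [← hone, character_mem_irrChar_iff_sum_eq_card, hone]
  simp

theorem charDeg_pos [Finite G] {χ : G → ℂ} (hχ : χ ∈ IrrChar G) : 0 < charDeg χ := by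
  obtain ⟨V, _, _, _, ρ, hρ, rfl⟩ := exists_representation_of_mem_irrChar hχ
  have := nontrivial_of_finrank_intertwiningMap_eq_one hρ
  rw [charDeg_character]
  exact Module.finrank_pos

theorem irrChar_apply_eq_one_of_charDeg_eq_one [Finite G] {χ : G → ℂ} (hχ : χ ∈ IrrChar G)
    (hdeg : charDeg χ = 1) {g : G} (hg : g ∈ commutator G) : χ g = 1 := by
  obtain ⟨V, _, _, _, ρ, -, rfl⟩ := exists_representation_of_mem_irrChar hχ
  rw [charDeg_character] at hdeg
  obtain ⟨c, hc, -⟩ := LinearMap.existsUnique_eq_smul_id_of_finrank_eq_one hdeg (ρ g)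
  have hdet := det_eq_one_of_mem_commutator ρ hg
  rw [hc, LinearMap.det_smul, LinearMap.det_id, hdeg, pow_one, mul_one] at hdet
  simp [Representation.character, hc, hdet, hdeg]

theorem sum_irrChar_mul_inv_eq_card [Fintype G] {χ : G → ℂ} (hχ : χ ∈ IrrChar G) :
    ∑ g, χ g * χ g⁻¹ = Nat.card G := by
  obtain ⟨V, hV, rfl⟩ := hχ
  exact (FDRep.simple_iff_char_is_norm_one V).1 hV

theorem sum_irrChar_mul_inv_eq_zero [Fintype G] {χ ψ : G → ℂ} (hχ : χ ∈ IrrChar G)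
    (hψ : ψ ∈ IrrChar G) (hne : χ ≠ ψ) : ∑ g, χ g * ψ g⁻¹ = 0 := by
  obtain ⟨V, _, rfl⟩ := hχ
  obtain ⟨W, _, rfl⟩ := hψ
  have hcard : (Nat.card G : ℂ) ≠ 0 := Nat.cast_ne_zero.2 Nat.card_pos.ne'
  have := invertibleOfNonzero hcard
  have hVW : ¬ Nonempty (V ≅ W) := fun ⟨i⟩ => hne (FDRep.char_iso i)
  have horth := FDRep.char_orthonormal V W
  rw [if_neg hVW] at horth
  exact (mul_eq_zero.1 horth).resolve_left (inv_ne_zero hcard)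

theorem eq_zero_of_forall_irrChar_sum_mul_eq_zero [Fintype G] {f : G → ℂ}
    (hf : ∀ g h, f (h * g * h⁻¹) = f g) (horth : ∀ χ ∈ IrrChar G, ∑ g, f g * χ g = 0) : f = 0 :=
  eq_zero_of_forall_isIrreducible_sum_smul_eq_zero fun _ _ _ _ ρ _ =>
    sum_smul_eq_zero_of_sum_mul_character_eq_zero ρ hf <| horth _ <|
      (character_mem_irrChar_iff ρ).2 (Representation.IsIrreducible.finrank_intertwiningMap_self ρ)

end IrreducibleCharacters

section Counting

variable (G : Type) [Group G] [Finite G]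

theorem linearIndependent_irrChar : LinearIndependent ℂ (Subtype.val : IrrChar G → G → ℂ) := by
  have := Fintype.ofFinite G
  have hcard : (Nat.card G : ℂ) ≠ 0 := Nat.cast_ne_zero.2 Nat.card_pos.ne'
  let pairing (ψ : IrrChar G) : (G → ℂ) →ₗ[ℂ] ℂ :=
    (Nat.card G : ℂ)⁻¹ • ∑ g, (ψ.1 g⁻¹) • LinearMap.proj g
  have pairing_apply (ψ : IrrChar G) (f : G → ℂ) :
      pairing ψ f = (Nat.card G : ℂ)⁻¹ * ∑ g, f g * ψ.1 g⁻¹ := by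
    simp [pairing, mul_comm]
  refine .of_pairwise_dual_eq_zero_one _ pairing (fun ψ χ hne => ?_) fun χ => ?_
  · have hχψ : χ.1 ≠ ψ.1 := fun h => hne (Subtype.ext h.symm)
    change pairing ψ χ.1 = 0
    rw [pairing_apply, sum_irrChar_mul_inv_eq_zero χ.2 ψ.2 hχψ, mul_zero]
  · rw [pairing_apply, sum_irrChar_mul_inv_eq_card χ.2, inv_mul_cancel₀ hcard]

instance : Finite (IrrChar G) := (linearIndependent_irrChar G).finite

noncomputable instance : Fintype (IrrChar G) := Fintype.ofFinite _

instance : Nonempty (IrrChar G) := ⟨1, one_mem_irrChar⟩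

theorem card_irrChar_le_card_conjClasses :
    Nat.card (IrrChar G) ≤ Nat.card (ConjClasses G) := by
  have := Fintype.ofFinite (ConjClasses G)
  let classFunctions := LinearMap.range (LinearMap.funLeft ℂ ℂ (ConjClasses.mk (α := G)))
  have hspan : Submodule.span ℂ (Set.range (Subtype.val : IrrChar G → G → ℂ)) ≤ classFunctions := by
    rw [Submodule.span_le]
    rintro _ ⟨χ, rfl⟩
    refine ⟨Quotient.lift χ.1 fun g h hgh => ?_, rfl⟩
    obtain ⟨c, rfl⟩ := isConj_iff.1 hgh
    exact (irrChar_apply_conj χ.2 g c).symm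
  calc Nat.card (IrrChar G)
      = Module.finrank ℂ (Submodule.span ℂ (Set.range (Subtype.val : IrrChar G → G → ℂ))) := by
        rw [finrank_span_eq_card (linearIndependent_irrChar G), Nat.card_eq_fintype_card]
    _ ≤ Module.finrank ℂ classFunctions := Submodule.finrank_mono hspan
    _ ≤ Module.finrank ℂ (ConjClasses G → ℂ) := LinearMap.finrank_range_le _
    _ = Nat.card (ConjClasses G) := by
        rw [Module.finrank_fintype_fun_eq_card, Nat.card_eq_fintype_card]

theorem card_conjClasses_le_card_irrChar :
    Nat.card (ConjClasses G) ≤ Nat.card (IrrChar G) := by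
  have := Fintype.ofFinite G
  have := Fintype.ofFinite (ConjClasses G)
  let coeff : (ConjClasses G → ℂ) →ₗ[ℂ] (IrrChar G → ℂ) :=
    LinearMap.pi fun χ => ∑ g, χ.1 g • LinearMap.proj (ConjClasses.mk g)
  have hinj : Function.Injective coeff := by
    refine (injective_iff_map_eq_zero _).2 fun f hf => ?_
    have hclass (g h : G) : f (ConjClasses.mk (h * g * h⁻¹)) = f (ConjClasses.mk g) :=
      congrArg f (ConjClasses.mk_eq_mk_iff_isConj.2 (isConj_iff.2 ⟨h, rfl⟩)).symm
    have horth (χ) (hχ : χ ∈ IrrChar G) : ∑ g, f (ConjClasses.mk g) * χ g = 0 := by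
      simpa [coeff, mul_comm] using congr_fun hf ⟨χ, hχ⟩
    have hzero := eq_zero_of_forall_irrChar_sum_mul_eq_zero hclass horth
    funext c
    obtain ⟨g, rfl⟩ := ConjClasses.mk_surjective c
    exact congr_fun hzero g
  simpa [Nat.card_eq_fintype_card] using LinearMap.finrank_le_finrank_of_injective hinj

theorem card_irrChar : Nat.card (IrrChar G) = Nat.card (ConjClasses G) :=
  le_antisymm (card_irrChar_le_card_conjClasses G) (card_conjClasses_le_card_irrChar G)

-- Both sides have the same inner product with every irreducible character.
theorem sum_charDeg_mul_irrChar_inv [DecidableEq G] (g : G) :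
    ∑ χ : IrrChar G, charDeg χ.1 * χ.1 g⁻¹ = if g = 1 then (Nat.card G : ℂ) else 0 := by
  have := Fintype.ofFinite G
  let f (g : G) : ℂ :=
    ∑ χ : IrrChar G, charDeg χ.1 * χ.1 g⁻¹ - if g = 1 then (Nat.card G : ℂ) else 0
  have hclass (g h : G) : f (h * g * h⁻¹) = f g := by
    have hconj (χ : IrrChar G) : χ.1 (h * g * h⁻¹)⁻¹ = χ.1 g⁻¹ := by
      rw [← irrChar_apply_conj χ.2 g⁻¹ h]
      group
    simp only [f, hconj, conj_eq_one_iff]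
  have horth (ψ) (hψ : ψ ∈ IrrChar G) : ∑ g, f g * ψ g = 0 := by
    have hsum (χ : IrrChar G) : ∑ g, charDeg χ.1 * χ.1 g⁻¹ * ψ g =
        if χ = ⟨ψ, hψ⟩ then (charDeg ψ * Nat.card G : ℂ) else 0 := by
      simp only [mul_assoc, ← Finset.mul_sum, mul_comm (χ.1 _)]
      split_ifs with h
      · rw [h, sum_irrChar_mul_inv_eq_card hψ]
      · have hne : ψ ≠ χ.1 := fun h' => h (Subtype.ext h'.symm)
        rw [sum_irrChar_mul_inv_eq_zero hψ χ.2 hne, mul_zero]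
    simp only [f, sub_mul, Finset.sum_sub_distrib, Finset.sum_mul]
    rw [Finset.sum_comm]
    simp only [hsum]
    simp [irrChar_apply_one hψ, mul_comm]
  exact sub_eq_zero.1 (congr_fun (eq_zero_of_forall_irrChar_sum_mul_eq_zero hclass horth) g)

theorem sum_charDeg_sq : ∑ χ : IrrChar G, charDeg χ.1 ^ 2 = Nat.card G := by
  classical
  have h := sum_charDeg_mul_irrChar_inv G 1
  rw [if_pos rfl, inv_one] at h
  rw [← Nat.cast_inj (R := ℂ), ← h]
  push_cast
  exact Finset.sum_congr rfl fun χ _ => by rw [irrChar_apply_one χ.2, sq]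

/-- The sum of the degrees of the irreducible characters of `G`, i.e. the numerator of `acd G`. -/
noncomputable def charDegSum : ℕ := ∑ χ : IrrChar G, charDeg χ.1

theorem acd_eq_charDegSum_div : acd G = charDegSum G / Nat.card (IrrChar G) := by
  have hset : {χ ∈ IrrChar G | True} = IrrChar G := Set.sep_true
  rw [acd, acdRel, hset, charDegSum, ← finsum_set_coe_eq_finsum_mem, finsum_eq_sum_of_fintype,
    Nat.cast_sum, Nat.card_coe_set_eq]

theorem card_irrChar_le_charDegSum : Nat.card (IrrChar G) ≤ charDegSum G := by
  rw [Nat.card_eq_fintype_card, ← Finset.card_univ, Finset.card_eq_sum_ones]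
  exact Finset.sum_le_sum fun χ _ => charDeg_pos χ.2

theorem one_le_acd : 1 ≤ acd G := by
  rw [acd_eq_charDegSum_div, one_le_div (by exact_mod_cast Nat.card_pos)]
  exact_mod_cast card_irrChar_le_charDegSum G

end Counting

section Inflation

theorem finrank_intertwiningMap_comp {k G H V : Type*} [Field k] [Group G] [Group H]
    [AddCommGroup V] [Module k V] {π : G →* H} (hπ : Function.Surjective π)
    (ρ : Representation k H V) :
    Module.finrank k (Representation.IntertwiningMap (ρ.comp π) (ρ.comp π)) =
      Module.finrank k (ρ.IntertwiningMap ρ) :=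
  LinearEquiv.finrank_eq
    { toFun := fun f => ⟨f.toLinearMap, hπ.forall.2 f.isIntertwining'⟩
      invFun := fun f => ⟨f.toLinearMap, fun g => f.isIntertwining' (π g)⟩
      map_add' := fun _ _ => rfl
      map_smul' := fun _ _ => rfl
      left_inv := fun _ => rfl
      right_inv := fun _ => rfl }

variable {G H : Type} [Group G] [Group H] [Finite G] [Finite H] {π : G →* H}

theorem character_comp_mem_irrChar_iff (hπ : Function.Surjective π) {V : Type} [AddCommGroup V]
    [Module ℂ V] [FiniteDimensional ℂ V] (ρ : Representation ℂ H V) :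
    ρ.character ∘ π ∈ IrrChar G ↔ ρ.character ∈ IrrChar H := by
  rw [character_mem_irrChar_iff, ← finrank_intertwiningMap_comp hπ]
  exact character_mem_irrChar_iff (G := G) (V := V) (ρ.comp π)

theorem comp_mem_irrChar (hπ : Function.Surjective π) {χ : H → ℂ} (hχ : χ ∈ IrrChar H) :
    χ ∘ π ∈ IrrChar G := by
  obtain ⟨V, _, _, _, ρ, -, rfl⟩ := exists_representation_of_mem_irrChar hχ
  exact (character_comp_mem_irrChar_iff hπ ρ).2 hχ

/-- Inflation of irreducible characters along a surjective homomorphism. -/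
def inflation (hπ : Function.Surjective π) (χ : IrrChar H) : IrrChar G :=
  ⟨χ.1 ∘ π, comp_mem_irrChar hπ χ.2⟩

theorem inflation_injective (hπ : Function.Surjective π) : Function.Injective (inflation hπ) :=
  fun _ _ h => Subtype.ext (hπ.injective_comp_right (congrArg Subtype.val h))

theorem charDeg_inflation (hπ : Function.Surjective π) (χ : IrrChar H) :
    charDeg (inflation hπ χ).1 = charDeg χ.1 := by
  simp [charDeg, inflation]

theorem acd_congr (e : G ≃* H) : acd G = acd H := by
  have hbij : Function.Bijective (inflation (π := e.toMonoidHom) e.surjective) := by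
    refine ⟨inflation_injective _, fun χ => ?_⟩
    exact ⟨inflation (π := e.symm.toMonoidHom) e.symm.surjective χ,
      Subtype.ext (funext fun g => congrArg χ.1 (e.symm_apply_apply g))⟩
  have hsum : charDegSum G = charDegSum H :=
    (Fintype.sum_bijective _ hbij _ _ fun χ => (charDeg_inflation _ χ).symm).symm
  rw [acd_eq_charDegSum_div, acd_eq_charDegSum_div, hsum, Nat.card_eq_of_bijective _ hbij]

theorem mem_range_inflation_of_le_ker {N : Subgroup G} [N.Normal] {V : Type} [AddCommGroup V]
    [Module ℂ V] [FiniteDimensional ℂ V] {ρ : Representation ℂ G V}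
    (hρ : ρ.character ∈ IrrChar G) (hN : ∀ g ∈ N, ρ g = 1) :
    ⟨ρ.character, hρ⟩ ∈ Set.range (inflation (QuotientGroup.mk'_surjective N)) := by
  let σ : Representation ℂ (G ⧸ N) V := QuotientGroup.lift N ρ hN
  have hσ : σ.character ∈ IrrChar (G ⧸ N) :=
    (character_comp_mem_irrChar_iff (QuotientGroup.mk'_surjective N) σ).1 hρ
  exact ⟨⟨σ.character, hσ⟩, rfl⟩

end Inflation

section Product

variable (A B : Type) [Group A] [Group B] [Finite A] [Finite B]

theorem card_conjClasses_prod :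
    Nat.card (ConjClasses (A × B)) = Nat.card (ConjClasses A) * Nat.card (ConjClasses B) := by
  have hA : (Nat.card A : ℚ) ≠ 0 := Nat.cast_ne_zero.2 Nat.card_pos.ne'
  have hB : (Nat.card B : ℚ) ≠ 0 := Nat.cast_ne_zero.2 Nat.card_pos.ne'
  have h := commProb_prod A B
  rw [commProb_def', commProb_def', commProb_def', Nat.card_prod, Nat.cast_mul] at h
  field_simp at h
  exact_mod_cast h

variable {A B}

theorem mul_mem_irrChar_prod {χ : A → ℂ} {ψ : B → ℂ} (hχ : χ ∈ IrrChar A) (hψ : ψ ∈ IrrChar B) :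
    (fun x : A × B => χ x.1 * ψ x.2) ∈ IrrChar (A × B) := by
  have := Fintype.ofFinite A
  have := Fintype.ofFinite B
  obtain ⟨V, _, _, _, ρ, -, rfl⟩ := exists_representation_of_mem_irrChar hχ
  obtain ⟨W, _, _, _, σ, -, rfl⟩ := exists_representation_of_mem_irrChar hψ
  have htensor : (Representation.tprod (ρ.comp (MonoidHom.fst A B))
      (σ.comp (MonoidHom.snd A B))).character = fun x => ρ.character x.1 * σ.character x.2 := by
    rw [Representation.char_tensor]
    rfl
  rw [← htensor, character_mem_irrChar_iff_sum_eq_card, htensor, Nat.card_prod, Nat.cast_mul,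
    ← sum_irrChar_mul_inv_eq_card hχ, ← sum_irrChar_mul_inv_eq_card hψ, Fintype.sum_mul_sum,
    Fintype.sum_prod_type]
  exact Finset.sum_congr rfl fun a _ => Finset.sum_congr rfl fun b _ => mul_mul_mul_comm ..

/-- The outer tensor product of irreducible characters. -/
def irrCharProd (χ : IrrChar A × IrrChar B) : IrrChar (A × B) :=
  ⟨fun x => χ.1.1 x.1 * χ.2.1 x.2, mul_mem_irrChar_prod χ.1.2 χ.2.2⟩

theorem charDeg_irrCharProd (χ : IrrChar A × IrrChar B) :
    charDeg (irrCharProd χ).1 = charDeg χ.1.1 * charDeg χ.2.1 := by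
  rw [← Nat.cast_inj (R := ℂ), Nat.cast_mul, ← irrChar_apply_one χ.1.2, ← irrChar_apply_one χ.2.2,
    ← irrChar_apply_one (irrCharProd χ).2]
  rfl

-- The inner product of two outer tensor products is the product of the inner products, so it
-- vanishes as soon as one of the two factors differs.
theorem irrCharProd_injective :
    Function.Injective (irrCharProd : IrrChar A × IrrChar B → IrrChar (A × B)) := by
  have := Fintype.ofFinite A
  have := Fintype.ofFinite B
  rintro ⟨χ, ψ⟩ ⟨χ', ψ'⟩ heq
  have hnorm : (∑ a, χ.1 a * χ'.1 a⁻¹) * ∑ b, ψ.1 b * ψ'.1 b⁻¹ = Nat.card (A × B) := by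
    rw [← sum_irrChar_mul_inv_eq_card (irrCharProd (χ, ψ)).2, Fintype.sum_mul_sum,
      Fintype.sum_prod_type]
    refine Finset.sum_congr rfl fun a _ => Finset.sum_congr rfl fun b _ => ?_
    rw [mul_mul_mul_comm]
    exact congr(_ * $(congr_fun (congrArg Subtype.val heq) (a⁻¹, b⁻¹))).symm
  have hne : (Nat.card (A × B) : ℂ) ≠ 0 := Nat.cast_ne_zero.2 Nat.card_pos.ne'
  obtain ⟨hχ, hψ⟩ := mul_ne_zero_iff.1 (hnorm.trans_ne hne)
  have hχχ' : χ.1 = χ'.1 := not_imp_comm.1 (sum_irrChar_mul_inv_eq_zero χ.2 χ'.2) hχ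
  have hψψ' : ψ.1 = ψ'.1 := not_imp_comm.1 (sum_irrChar_mul_inv_eq_zero ψ.2 ψ'.2) hψ
  exact Prod.ext (Subtype.ext hχχ') (Subtype.ext hψψ')

theorem irrCharProd_bijective :
    Function.Bijective (irrCharProd : IrrChar A × IrrChar B → IrrChar (A × B)) := by
  refine irrCharProd_injective.bijective_of_nat_card_le ?_
  rw [Nat.card_prod, card_irrChar, card_irrChar, card_irrChar, card_conjClasses_prod]

variable (A B)

theorem acd_prod : acd (A × B) = acd A * acd B := by
  have hsum : charDegSum (A × B) = charDegSum A * charDegSum B := by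
    rw [charDegSum, ← Fintype.sum_bijective _ irrCharProd_bijective _ _ fun _ => rfl]
    simp only [charDeg_irrCharProd, charDegSum, Fintype.sum_mul_sum, Fintype.sum_prod_type]
  rw [acd_eq_charDegSum_div, acd_eq_charDegSum_div, acd_eq_charDegSum_div, hsum,
    ← Nat.card_eq_of_bijective _ irrCharProd_bijective, Nat.card_prod, Nat.cast_mul, Nat.cast_mul,
    mul_div_mul_comm]

end Product

section CentralExtension

theorem card_conjClasses_le_card_mul_card_quotient {G : Type*} [Group G] [Finite G]
    (N : Subgroup G) [N.Normal] :
    Nat.card (ConjClasses G) ≤ Nat.card N * Nat.card (ConjClasses (G ⧸ N)) := by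
  rw [← Nat.card_prod]
  refine Nat.card_le_card_of_surjective
    (fun x : N × ConjClasses (G ⧸ N) => ConjClasses.mk ((Quotient.out x.2).out * x.1)) fun c => ?_
  obtain ⟨g, rfl⟩ := ConjClasses.mk_surjective c
  let r : G ⧸ N := Quotient.out (ConjClasses.mk (g : G ⧸ N))
  have hr : IsConj (g : G ⧸ N) r :=
    ConjClasses.mk_eq_mk_iff_isConj.1 (Quotient.out_eq (ConjClasses.mk (g : G ⧸ N))).symm
  obtain ⟨x, hx⟩ := isConj_iff.1 hr
  obtain ⟨y, rfl⟩ := QuotientGroup.mk_surjective x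
  have hmem : r.out⁻¹ * (y * g * y⁻¹) ∈ N := by
    rw [← QuotientGroup.eq, QuotientGroup.out_eq', ← hx]
    rfl
  refine ⟨(⟨_, hmem⟩, ConjClasses.mk (g : G ⧸ N)), ConjClasses.mk_eq_mk_iff_isConj.2 ?_⟩
  exact (isConj_iff.2 ⟨y, (mul_inv_cancel_left r.out _).symm⟩).symm

variable {G : Type} [Group G] [Finite G] {Z : Subgroup G} [Z.Normal] {p : ℕ} [Fact p.Prime]

-- A central element acting nontrivially acts as a primitive `p`-th root of unity, whose
-- `charDeg χ`-th power is a determinant, hence `1` on the commutator subgroup.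
theorem prime_dvd_charDeg_of_notMem_range_inflation (hcenter : Z ≤ Subgroup.center G)
    (hcomm : Z ≤ commutator G) (hcard : Nat.card Z = p) {χ : IrrChar G}
    (hχ : χ ∉ Set.range (inflation (QuotientGroup.mk'_surjective Z))) : p ∣ charDeg χ.1 := by
  obtain ⟨χ, hmem⟩ := χ
  obtain ⟨V, _, _, _, ρ, hρ, rfl⟩ := exists_representation_of_mem_irrChar hmem
  obtain ⟨z, hz, hρz⟩ : ∃ z ∈ Z, ρ z ≠ 1 := by
    by_contra! h
    exact hχ (mem_range_inflation_of_le_ker hmem h)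
  have hscalar (g : G) : Commute (ρ z) (ρ g) :=
    Commute.map (Subgroup.mem_center_iff.1 (hcenter hz) g).symm ρ
  obtain ⟨c, hc⟩ := exists_eq_smul_one_of_commute hρ hscalar
  have := nontrivial_of_finrank_intertwiningMap_eq_one hρ
  have hcp : c ^ p = 1 := by
    have hzp : z ^ p = 1 := by
      simpa [hcard] using congrArg Subtype.val (pow_card_eq_one' (x := (⟨z, hz⟩ : Z)))
    have h : (c ^ p) • (1 : Module.End ℂ V) = (1 : ℂ) • 1 := by
      rw [one_smul, ← one_pow p, ← smul_pow, ← hc, ← map_pow, hzp, map_one, one_pow]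
    exact smul_left_injective ℂ one_ne_zero h
  have hc1 : c ≠ 1 := fun h => hρz (by rw [hc, h, one_smul])
  rw [charDeg_character, ← orderOf_eq_prime hcp hc1]
  refine orderOf_dvd_of_pow_eq_one ?_
  have hdet := det_eq_one_of_mem_commutator ρ (hcomm hz)
  rwa [hc, LinearMap.det_smul, map_one, mul_one] at hdet

theorem charDegSum_quotient_add_le (hcenter : Z ≤ Subgroup.center G) (hcomm : Z ≤ commutator G)
    (hcard : Nat.card Z = p) :
    charDegSum (G ⧸ Z) + p * Nat.card (IrrChar G) ≤
      charDegSum G + p * Nat.card (IrrChar (G ⧸ Z)) := by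
  classical
  let infl := inflation (QuotientGroup.mk'_surjective Z)
  let inflated : Finset (IrrChar G) := Finset.univ.image infl
  have hinj : Function.Injective infl := inflation_injective _
  have hinflated : ∑ χ ∈ inflated, charDeg χ.1 = charDegSum (G ⧸ Z) := by
    rw [Finset.sum_image hinj.injOn]
    exact Finset.sum_congr rfl fun χ _ => charDeg_inflation _ χ
  have hcompl : p * inflatedᶜ.card ≤ ∑ χ ∈ inflatedᶜ, charDeg χ.1 := by
    rw [mul_comm, ← smul_eq_mul]
    refine Finset.card_nsmul_le_sum _ _ _ fun χ hχ => Nat.le_of_dvd (charDeg_pos χ.2) ?_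
    refine prime_dvd_charDeg_of_notMem_range_inflation hcenter hcomm hcard ?_
    simpa [inflated, infl] using hχ
  have hcards : inflatedᶜ.card + Nat.card (IrrChar (G ⧸ Z)) = Nat.card (IrrChar G) := by
    rw [Nat.card_eq_fintype_card, Nat.card_eq_fintype_card, ← Finset.card_univ,
      ← Finset.card_image_of_injective _ hinj, Finset.card_compl_add_card]
  have hsplit : charDegSum G = charDegSum (G ⧸ Z) + ∑ χ ∈ inflatedᶜ, charDeg χ.1 := by
    rw [← hinflated, Finset.sum_add_sum_compl, charDegSum]
  rw [hsplit, ← hcards]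
  linarith

theorem acd_ge_of_le_acd_quotient (hcenter : Z ≤ Subgroup.center G) (hcomm : Z ≤ commutator G)
    (hcard : Nat.card Z = p) (hp : p ≤ acd (G ⧸ Z)) : p - 1 + acd (G ⧸ Z) / p ≤ acd G := by
  have hle : (Nat.card (IrrChar G) : ℝ) ≤ p * Nat.card (IrrChar (G ⧸ Z)) := by
    have h := card_conjClasses_le_card_mul_card_quotient Z
    rw [hcard, ← card_irrChar, ← card_irrChar] at h
    exact_mod_cast h
  have hsum : (charDegSum (G ⧸ Z) + p * Nat.card (IrrChar G) : ℝ) ≤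
      charDegSum G + p * Nat.card (IrrChar (G ⧸ Z)) :=
    mod_cast charDegSum_quotient_add_le hcenter hcomm hcard
  have hn : (0 : ℝ) < Nat.card (IrrChar G) := Nat.cast_pos.2 Nat.card_pos
  have hm : (0 : ℝ) < Nat.card (IrrChar (G ⧸ Z)) := Nat.cast_pos.2 Nat.card_pos
  have hp0 : (0 : ℝ) < p := Nat.cast_pos.2 (Fact.out : p.Prime).pos
  have ha : (charDegSum (G ⧸ Z) : ℝ) = acd (G ⧸ Z) * Nat.card (IrrChar (G ⧸ Z)) := by
    rw [acd_eq_charDegSum_div, div_mul_cancel₀ _ hm.ne']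
  rw [ha] at hsum
  set n := (Nat.card (IrrChar G) : ℝ)
  set m := (Nat.card (IrrChar (G ⧸ Z)) : ℝ)
  set a := acd (G ⧸ Z)
  rw [acd_eq_charDegSum_div, le_div_iff₀ hn]
  have hexcess : (a / p - 1) * n ≤ (a / p - 1) * (p * m) :=
    mul_le_mul_of_nonneg_left hle (sub_nonneg.2 ((one_le_div hp0).2 hp))
  calc (p - 1 + a / p) * n = p * n + (a / p - 1) * n := by ring
    _ ≤ p * n + (a / p - 1) * (p * m) := by gcongr
    _ = a * m + p * n - p * m := by field_simp; ring
    _ ≤ charDegSum G := by linarith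

end CentralExtension

section CentralProduct

variable {G : Type*} [Group G]

theorem exists_quotient_inf_mulEquiv_prod {N₁ N₂ : Subgroup G} [N₁.Normal] [N₂.Normal]
    (h : N₁ ⊔ N₂ = ⊤) : Nonempty (G ⧸ (N₁ ⊓ N₂) ≃* (G ⧸ N₁) × (G ⧸ N₂)) := by
  let f : G →* (G ⧸ N₁) × (G ⧸ N₂) := (QuotientGroup.mk' N₁).prod (QuotientGroup.mk' N₂)
  have hker : f.ker = N₁ ⊓ N₂ := by
    rw [MonoidHom.ker_prod, QuotientGroup.ker_mk', QuotientGroup.ker_mk']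
  have hsurj : Function.Surjective f := by
    rintro ⟨x, y⟩
    obtain ⟨a, rfl⟩ := QuotientGroup.mk_surjective x
    obtain ⟨b, rfl⟩ := QuotientGroup.mk_surjective y
    have hab : a⁻¹ * b ∈ N₁ ⊔ N₂ := h ▸ Subgroup.mem_top _
    obtain ⟨n₁, hn₁, n₂, hn₂, hn⟩ := Subgroup.mem_sup_of_normal_right.1 hab
    have hb : b = a * n₁ * n₂ := by rw [mul_assoc, hn, mul_inv_cancel_left]
    exact ⟨a * n₁, Prod.ext (QuotientGroup.mk_mul_of_mem a hn₁)
      (hb ▸ (QuotientGroup.mk_mul_of_mem _ hn₂).symm)⟩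
  exact ⟨(QuotientGroup.quotientMulEquivOfEq hker).symm.trans
    (QuotientGroup.quotientKerEquivOfSurjective f hsurj)⟩

theorem centralizer_subgroupOf_self (M : Subgroup G) :
    (Subgroup.centralizer (M : Set G)).subgroupOf M = Subgroup.center M := by
  ext m
  simp [Subgroup.mem_subgroupOf, Subgroup.mem_centralizer_iff, Subgroup.mem_center_iff,
    Subtype.ext_iff]

theorem inf_centralizer_eq_map_center (M : Subgroup G) :
    M ⊓ Subgroup.centralizer M = (Subgroup.center M).map M.subtype := by
  rw [← centralizer_subgroupOf_self, Subgroup.subgroupOf_map_subtype, inf_comm]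

variable {M : Subgroup G}

theorem normal_of_sup_centralizer_eq_top (hM : M ⊔ Subgroup.centralizer M = ⊤) : M.Normal := by
  rw [← Subgroup.normalizer_eq_top_iff, ← top_le_iff, ← hM]
  exact sup_le Subgroup.le_normalizer (Subgroup.centralizer_le_normalizer _)

theorem inf_centralizer_le_center (hM : M ⊔ Subgroup.centralizer M = ⊤) :
    M ⊓ Subgroup.centralizer M ≤ Subgroup.center G := by
  rw [← Subgroup.centralizer_univ, ← Subgroup.coe_top, ← hM, Subgroup.le_centralizer_iff]
  refine sup_le (Subgroup.le_centralizer_iff.1 inf_le_right) ?_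
  exact Subgroup.centralizer_le inf_le_left

theorem exists_quotient_centralizer_mulEquiv [(Subgroup.centralizer (M : Set G)).Normal]
    (hM : M ⊔ Subgroup.centralizer M = ⊤) :
    Nonempty (G ⧸ Subgroup.centralizer (M : Set G) ≃* M ⧸ Subgroup.center M) := by
  let f : M →* G ⧸ Subgroup.centralizer (M : Set G) := (QuotientGroup.mk' _).comp M.subtype
  have hker : f.ker = Subgroup.center M := by
    rw [← MonoidHom.comap_ker, QuotientGroup.ker_mk']
    exact centralizer_subgroupOf_self M
  have hsurj : Function.Surjective f := by
    intro x
    obtain ⟨g, rfl⟩ := QuotientGroup.mk_surjective x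
    obtain ⟨m, hm, c, hc, rfl⟩ := Subgroup.mem_sup_of_normal_right.1 (hM ▸ Subgroup.mem_top g)
    exact ⟨⟨m, hm⟩, (QuotientGroup.mk_mul_of_mem m hc).symm⟩
  exact ⟨(QuotientGroup.quotientKerEquivOfSurjective f hsurj).symm.trans
    (QuotientGroup.quotientMulEquivOfEq hker)⟩

theorem acd_ge_of_sup_centralizer_eq_top {G : Type} [Group G] [Finite G] {M : Subgroup G}
    (hM : M ⊔ Subgroup.centralizer M = ⊤) (hcomm : Subgroup.center M ≤ commutator M) {p : ℕ}
    [Fact p.Prime] (hcard : Nat.card (Subgroup.center M) = p)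
    (hp : p ≤ acd (M ⧸ Subgroup.center M)) :
    p - 1 + acd (M ⧸ Subgroup.center M) / p ≤ acd G := by
  have := normal_of_sup_centralizer_eq_top hM
  let Z : Subgroup G := M ⊓ Subgroup.centralizer M
  have hZ : Z = (Subgroup.center M).map M.subtype := inf_centralizer_eq_map_center M
  have hZcard : Nat.card Z = p := by
    rw [hZ, Subgroup.card_map_of_injective M.subtype_injective, hcard]
  have hZcomm : Z ≤ commutator G := by
    rw [hZ]
    refine (Subgroup.map_mono hcomm).trans ?_
    rw [Subgroup.map_subtype_commutator]
    exact Subgroup.commutator_mono le_top le_top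
  have hquot : acd (M ⧸ Subgroup.center M) ≤ acd (G ⧸ Z) := by
    obtain ⟨e⟩ := exists_quotient_inf_mulEquiv_prod hM
    obtain ⟨e'⟩ := exists_quotient_centralizer_mulEquiv hM
    rw [acd_congr e, acd_prod, acd_congr e']
    exact le_mul_of_one_le_left (zero_le_one.trans (one_le_acd _)) (one_le_acd _)
  calc p - 1 + acd (M ⧸ Subgroup.center M) / p ≤ p - 1 + acd (G ⧸ Z) / p := by gcongr
    _ ≤ acd G := acd_ge_of_le_acd_quotient (inf_centralizer_le_center hM) hZcomm hZcard
        (hp.trans hquot)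

end CentralProduct

section PerfectGroup

variable {G : Type} [Group G] [Finite G]

theorem two_le_charDeg_of_commutator_eq_top (hG : commutator G = ⊤) {χ : G → ℂ}
    (hχ : χ ∈ IrrChar G) (hne : χ ≠ 1) : 2 ≤ charDeg χ := by
  by_contra! hlt
  have hdeg : charDeg χ = 1 := le_antisymm (Nat.lt_succ_iff.1 hlt) (charDeg_pos hχ)
  refine hne (funext fun g => irrChar_apply_eq_one_of_charDeg_eq_one hχ hdeg ?_)
  exact hG ▸ Subgroup.mem_top g

-- With `d = 2 + e` for the nontrivial degrees, `∑ e ^ 2 ≤ (∑ e) ^ 2` bounds `∑ d ^ 2 = |G| - 1`.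
theorem exists_charDegSum_eq_of_commutator_eq_top (hG : commutator G = ⊤) :
    ∃ e : ℕ, charDegSum G + 1 = 2 * Nat.card (IrrChar G) + e ∧
      Nat.card G + 3 ≤ 4 * Nat.card (IrrChar G) + 4 * e + e ^ 2 := by
  classical
  let nontriv : Finset (IrrChar G) := Finset.univ.erase ⟨1, one_mem_irrChar⟩
  have hdeg (χ : IrrChar G) (hχ : χ ∈ nontriv) : ∃ e, charDeg χ.1 = 2 + e :=
    Nat.exists_eq_add_of_le <| two_le_charDeg_of_commutator_eq_top hG χ.2 fun h =>
      Finset.ne_of_mem_erase hχ (Subtype.ext h)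
  choose! e he using hdeg
  have hone : charDeg (1 : G → ℂ) = 1 := by simp [charDeg]
  have hcard : nontriv.card + 1 = Nat.card (IrrChar G) := by
    rw [Finset.card_erase_add_one (Finset.mem_univ _), Finset.card_univ, Nat.card_eq_fintype_card]
  have hsum : charDegSum G = 1 + (2 * nontriv.card + ∑ χ ∈ nontriv, e χ) := by
    rw [charDegSum, ← Finset.add_sum_erase _ _ (Finset.mem_univ ⟨1, one_mem_irrChar⟩), hone,
      Finset.sum_congr rfl he, Finset.sum_add_distrib, Finset.sum_const, smul_eq_mul, mul_comm]
  have hsq : Nat.card G =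
      1 + (4 * nontriv.card + 4 * ∑ χ ∈ nontriv, e χ + ∑ χ ∈ nontriv, e χ ^ 2) := by
    have hexpand (χ) (hχ : χ ∈ nontriv) : charDeg χ.1 ^ 2 = 4 + 4 * e χ + e χ ^ 2 := by
      rw [he χ hχ]; ring
    rw [← sum_charDeg_sq, ← Finset.add_sum_erase _ _ (Finset.mem_univ ⟨1, one_mem_irrChar⟩), hone,
      Finset.sum_congr rfl hexpand, Finset.sum_add_distrib, Finset.sum_add_distrib,
      Finset.sum_const, smul_eq_mul, mul_comm, Finset.mul_sum]
    simp
  have hle : ∑ χ ∈ nontriv, e χ ^ 2 ≤ (∑ χ ∈ nontriv, e χ) ^ 2 :=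
    Finset.sum_sq_le_sq_sum_of_nonneg fun _ _ => Nat.zero_le _
  exact ⟨∑ χ ∈ nontriv, e χ, by lia, by lia⟩

end PerfectGroup

section AlternatingGroup

open Equiv.Perm

theorem card_fiber_conjClasses_map_subtype_le_index {G : Type*} [Group G] (H : Subgroup G)
    [H.FiniteIndex] (c : ConjClasses G) :
    Nat.card {d : ConjClasses H // ConjClasses.map H.subtype d = c} ≤ H.index := by
  obtain ⟨g, rfl⟩ := ConjClasses.mk_surjective c
  have hconj (d : {d : ConjClasses H // ConjClasses.map H.subtype d = ConjClasses.mk g}) :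
      ∃ h : H, ConjClasses.mk h = d.1 ∧ ∃ x : G, x * h * x⁻¹ = g := by
    obtain ⟨d, hd⟩ := d
    obtain ⟨h, rfl⟩ := ConjClasses.mk_surjective d
    exact ⟨h, rfl, isConj_iff.1 (ConjClasses.mk_eq_mk_iff_isConj.1 hd)⟩
  choose h hh x hx using hconj
  refine Nat.card_le_card_of_injective (fun d => (x d : G ⧸ H)) fun d d' hdd' => ?_
  let k : H := ⟨(x d)⁻¹ * x d', QuotientGroup.eq.1 hdd'⟩
  refine Subtype.ext ((hh d).symm.trans (.trans ?_ (hh d')))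
  refine ConjClasses.mk_eq_mk_iff_isConj.2 (isConj_iff.2 ⟨k⁻¹, Subtype.ext ?_⟩)
  have hg : x d * h d * (x d)⁻¹ = x d' * h d' * (x d')⁻¹ := (hx d).trans (hx d').symm
  calc ((x d)⁻¹ * x d')⁻¹ * h d * ((x d)⁻¹ * x d')⁻¹⁻¹
      = (x d')⁻¹ * (x d * h d * (x d)⁻¹) * x d' := by group
    _ = h d' := by rw [hg]; group

variable {α : Type*} [Fintype α] [DecidableEq α]

/-- The cycle type shared by the elements of a conjugacy class of the alternating group. -/
def conjClassCycleType : ConjClasses (alternatingGroup α) → Multiset ℕ :=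
  Quotient.lift (fun σ => (σ : Equiv.Perm α).cycleType) fun _ _ h =>
    isConj_iff_cycleType_eq.1 ((alternatingGroup α).subtype.map_isConj h)

theorem card_fiber_conjClassCycleType_le_one {m : Multiset ℕ} (hm : m.sum + 2 ≤ Fintype.card α) :
    Nat.card {d : ConjClasses (alternatingGroup α) // conjClassCycleType d = m} ≤ 1 := by
  refine Finite.card_le_one_iff_subsingleton.2 ⟨fun ⟨c, hc⟩ ⟨d, hd⟩ => Subtype.ext ?_⟩
  obtain ⟨σ, rfl⟩ := ConjClasses.mk_surjective c
  obtain ⟨τ, rfl⟩ := ConjClasses.mk_surjective d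
  refine ConjClasses.mk_eq_mk_iff_isConj.2 (alternatingGroup.isConj_of ?_ ?_)
  · exact isConj_iff_cycleType_eq.2 (hc.trans hd.symm)
  · rwa [← sum_cycleType, show (σ : Equiv.Perm α).cycleType = m from hc]

theorem card_fiber_conjClassCycleType_le_two [Nontrivial α] (m : Multiset ℕ) :
    Nat.card {d : ConjClasses (alternatingGroup α) // conjClassCycleType d = m} ≤ 2 := by
  rcases isEmpty_or_nonempty {d : ConjClasses (alternatingGroup α) // conjClassCycleType d = m}
    with _ | ⟨⟨d, hd⟩⟩
  · simp
  obtain ⟨σ, rfl⟩ := ConjClasses.mk_surjective d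
  refine le_of_le_of_eq (le_trans ?_ (card_fiber_conjClasses_map_subtype_le_index
    (alternatingGroup α) (ConjClasses.mk (σ : Equiv.Perm α)))) alternatingGroup.index_eq_two
  refine (Nat.card_congr (Equiv.subtypeEquivRight fun d => ?_)).le
  obtain ⟨τ, rfl⟩ := ConjClasses.mk_surjective d
  rw [← hd]
  exact isConj_iff_cycleType_eq.symm.trans ConjClasses.mk_eq_mk_iff_isConj.symm

/-- The cycle types of the even permutations of six letters, with fixed points omitted. -/
abbrev evenCycleTypesSix : Finset (Multiset ℕ) := {0, {3}, {2, 2}, {3, 3}, {4, 2}, {5}}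

theorem mem_evenCycleTypesSix {s : Multiset ℕ} (htwo : ∀ x ∈ s, 2 ≤ x) (hsum : s.sum ≤ 6)
    (heven : Even (s.sum + s.card)) : s ∈ evenCycleTypesSix := by
  have hcard : s.card ≤ 3 := by
    have h := Multiset.card_nsmul_le_sum htwo
    rw [smul_eq_mul] at h
    lia
  interval_cases hs : s.card
  · rw [Multiset.card_eq_zero] at hs
    simp [hs]
  · obtain ⟨a, rfl⟩ := Multiset.card_eq_one.1 hs
    simp only [Multiset.mem_singleton, forall_eq, Multiset.sum_singleton] at htwo hsum heven
    interval_cases a <;> revert heven <;> decide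
  · obtain ⟨a, b, rfl⟩ := Multiset.card_eq_two.1 hs
    simp only [Multiset.insert_eq_cons, Multiset.mem_cons, Multiset.mem_singleton,
      forall_eq_or_imp, forall_eq, Multiset.sum_cons, Multiset.sum_singleton] at htwo hsum heven
    have : a ≤ 4 := by lia
    have : b ≤ 4 := by lia
    obtain ⟨ha, hb⟩ := htwo
    interval_cases a <;> interval_cases b <;> revert hsum heven <;> decide
  · obtain ⟨a, b, c, rfl⟩ := Multiset.card_eq_three.1 hs
    simp only [Multiset.insert_eq_cons, Multiset.mem_cons, Multiset.mem_singleton,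
      forall_eq_or_imp, forall_eq, Multiset.sum_cons, Multiset.sum_singleton] at htwo hsum heven
    grind

theorem cycleType_mem_evenCycleTypesSix {σ : Equiv.Perm (Fin 6)}
    (hσ : σ ∈ alternatingGroup (Fin 6)) : σ.cycleType ∈ evenCycleTypesSix := by
  refine mem_evenCycleTypesSix (fun _ => two_le_of_mem_cycleType) σ.sum_cycleType_le ?_
  rw [mem_alternatingGroup, sign_of_cycleType] at hσ
  exact (neg_one_pow_eq_one_iff_even (by decide)).1 hσ

theorem card_conjClasses_alternatingGroup_six_le :
    Nat.card (ConjClasses (alternatingGroup (Fin 6))) ≤ 9 := by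
  classical
  have hmem (c : ConjClasses (alternatingGroup (Fin 6))) :
      conjClassCycleType c ∈ evenCycleTypesSix := by
    obtain ⟨σ, rfl⟩ := ConjClasses.mk_surjective c
    exact cycleType_mem_evenCycleTypesSix σ.2
  have hfiber (m : Multiset ℕ) :
      (Finset.univ.filter fun c : ConjClasses (alternatingGroup (Fin 6)) =>
        conjClassCycleType c = m).card ≤ if m.sum ≤ 4 then 1 else 2 := by
    rw [← Fintype.card_subtype, ← Nat.card_eq_fintype_card]
    split_ifs with hm
    · exact card_fiber_conjClassCycleType_le_one (by simpa using hm)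
    · exact card_fiber_conjClassCycleType_le_two m
  rw [Nat.card_eq_fintype_card, ← Finset.card_univ,
    Finset.card_eq_sum_card_fiberwise fun c _ => hmem c]
  exact (Finset.sum_le_sum fun m _ => hfiber m).trans (by decide)

theorem card_alternatingGroup_six : Nat.card (alternatingGroup (Fin 6)) = 360 := by
  rw [nat_card_alternatingGroup, Nat.card_fin]
  rfl

theorem le_acd_alternatingGroup_six : 18 / 5 ≤ acd (alternatingGroup (Fin 6)) := by
  obtain ⟨e, hsum, hcard⟩ := exists_charDegSum_eq_of_commutator_eq_top
    (commutator_alternatingGroup_eq_top (α := Fin 6) (by simp))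
  have hle := card_conjClasses_alternatingGroup_six_le
  rw [card_alternatingGroup_six] at hcard
  rw [← card_irrChar] at hle
  have he : 17 ≤ e := by
    by_contra! hlt
    have hsq : e ^ 2 ≤ 16 ^ 2 := Nat.pow_le_pow_left (Nat.le_of_lt_succ hlt) 2
    lia
  rw [acd_eq_charDegSum_div, div_le_div_iff₀ (by norm_num) (by exact_mod_cast Nat.card_pos)]
  norm_cast
  lia

end AlternatingGroup

theorem acd_ge_of_central_product_triple_cover_A6_general (G : Type) [Group G] [Finite G]
    (M C : Subgroup G)
    (hprod : ∀ g : G, ∃ m ∈ M, ∃ c ∈ C, g = m * c)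
    (hcomm : ∀ m ∈ M, ∀ c ∈ C, m * c = c * m)
    (hperf : commutator ↥M = ⊤)
    (hcenter : Nat.card (Subgroup.center ↥M) = 3)
    (hquot : Nonempty ((↥M ⧸ Subgroup.center ↥M) ≃* alternatingGroup (Fin 6))) :
    16 / 5 ≤ acd G := by
  have htop : M ⊔ Subgroup.centralizer M = ⊤ := by
    refine eq_top_iff.2 fun g _ => ?_
    obtain ⟨m, hm, c, hc, rfl⟩ := hprod g
    exact Subgroup.mul_mem_sup hm (Subgroup.mem_centralizer_iff.2 fun x hx => hcomm x hx c hc)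
  have hacd : 18 / 5 ≤ acd (M ⧸ Subgroup.center M) :=
    hquot.elim fun e => acd_congr e ▸ le_acd_alternatingGroup_six
  have : Fact (Nat.Prime 3) := ⟨Nat.prime_three⟩
  have h := acd_ge_of_sup_centralizer_eq_top htop (hperf ▸ le_top) hcenter
    (le_trans (by norm_num) hacd)
  push_cast at h
  linarith

/-- If the finite group `G` is a central product `G = MC` where `M` is perfect
with center of order `3` and `M/Z(M) ≅ A₆`, and `M ∩ C = Z(M)`, then
`acd(G) ≥ 16/5`. -/
theorem acd_ge_of_central_product_triple_cover_A6 (G : Type) [Group G] [Finite G]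
    (M C : Subgroup G)
    (hprod : ∀ g : G, ∃ m ∈ M, ∃ c ∈ C, g = m * c)
    (hcomm : ∀ m ∈ M, ∀ c ∈ C, m * c = c * m)
    (hperf : commutator ↥M = ⊤)
    (hcenter : Nat.card (Subgroup.center ↥M) = 3)
    (hquot : Nonempty ((↥M ⧸ Subgroup.center ↥M) ≃* alternatingGroup (Fin 6)))
    (hZ : M ⊓ C = (Subgroup.center ↥M).map M.subtype) :
    16 / 5 ≤ acd G :=
  acd_ge_of_central_product_triple_cover_A6_general G M C hprod hcomm hperf hcenter hquot
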